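/- Suppose $\lambda$ is in the affine Weyl orbit of a strictly dominant $\Lambda$ (with $0<(\Lambda,\gamma)<r$ for all positive roots), $\alpha,\beta$ are positive roots with $\alpha\ne\beta$ or $(\alpha,\beta)\ne 2$, and $(\lambda,\lambda^\alpha,\lambda^{\alpha,\beta})$ is admissible. Then there is a unique pair of positive roots $(\alpha',\beta')$ with $\alpha'\ne\alpha$ such that $(\lambda,\lambda^{\alpha'},\lambda^{\alpha',\beta'})$ is admissible and $\lambda^{\alpha',\beta'} = \lambda^{\alpha,\beta}$ (a 'commutative square'). Explicitly: if $(\alpha,\beta)=0$ then $(\alpha',\beta')=(\beta,\alpha)$; if $(\alpha,\beta)=1$ then $(\alpha',\beta') = (\beta, \alpha-\beta)$ or $(\beta-\alpha,\alpha)$ according to which difference is positive; if $(\alpha,\beta)=-1$ then $(\alpha',\beta') = (\alpha+\beta,\alpha)$ if $m_\alpha(\lambda) > m_\beta(\lambda^\alpha)$ and $(\beta,\alpha+\beta)$ if $m_\alpha(\lambda) < m_\beta(\lambda^\alpha)$. -/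

import Mathlib

open scoped Classical

/-- Number of inversions of a permutation of `Fin n` (the Coxeter length in `S_n`). -/
def invCount {n : ℕ} (σ : Equiv.Perm (Fin n)) : ℕ :=
  (Finset.univ.filter (fun p : Fin n × Fin n => p.1 < p.2 ∧ σ p.2 < σ p.1)).card

/-- The degree increment `d_α(λ)` for `λ = t_γ σ Λ` and the positive root
`α = ε_i - ε_j` (`i < j`): it equals `ℓ(r_α σ) - ℓ(σ)` if `(σΛ, α) > 0`, and
`ℓ(r_α σ) - ℓ(σ) + 2|α|` if `(σΛ, α) < 0`, where `|α| = j - i` and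
`(σΛ, ε_i - ε_j) = Λ(σ⁻¹ i) - Λ(σ⁻¹ j)`. -/
noncomputable def dval {n : ℕ} (Λ : Fin n → ℝ) (σ : Equiv.Perm (Fin n)) (i j : Fin n) : ℤ :=
  if Λ (σ.symm j) < Λ (σ.symm i) then
    (invCount (Equiv.swap i j * σ) : ℤ) - (invCount σ : ℤ)
  else
    (invCount (Equiv.swap i j * σ) : ℤ) - (invCount σ : ℤ) + 2 * ((j : ℤ) - (i : ℤ))


/-- The root `ε_i - ε_j` of `A_{n-1}`, as a vector in `ℝ^n`. -/
def rootv (n : ℕ) (i j : Fin n) : Fin n → ℝ :=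
  fun t => (if t = i then 1 else 0) - (if t = j then 1 else 0)

/-- Standard inner product on `ℝ^n`. -/
def pairing {n : ℕ} (v w : Fin n → ℝ) : ℝ := ∑ t, v t * w t

/-- `isM r λ α m` says that `m = m_α(λ)`: the unique integer with `0 < m < r`
and `m ≡ (λ, α) mod r`. -/
def isM {n : ℕ} (r : ℤ) (lam : Fin n → ℝ) (al : Fin n → ℝ) (m : ℤ) : Prop :=
  0 < m ∧ m < r ∧ ∃ c : ℤ, pairing lam al = (m : ℝ) + (r : ℝ) * (c : ℝ)

/-- `AdmSq n r Λ σ lam endv i' j' k' l'` says that for the positive roots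
`α' = ε_{i'} - ε_{j'}`, `β' = ε_{k'} - ε_{l'}`, the triple
`(λ, λ^{α'}, λ^{α',β'})` is admissible and `λ^{α',β'} = endv`. -/
def AdmSq (n : ℕ) (r : ℤ) (Λ : Fin n → ℝ) (σ : Equiv.Perm (Fin n))
    (lam endv : Fin n → ℝ) (i' j' k' l' : Fin n) : Prop :=
  i' < j' ∧ k' < l' ∧
  dval Λ σ i' j' = 1 ∧ dval Λ (Equiv.swap i' j' * σ) k' l' = 1 ∧
  ∃ μ μ' : ℤ,
    isM r lam (rootv n i' j') μ ∧
    isM r (fun t => lam t - (μ : ℝ) * rootv n i' j' t) (rootv n k' l') μ' ∧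
    endv = fun t => lam t - (μ : ℝ) * rootv n i' j' t - (μ' : ℝ) * rootv n k' l' t

/-!
The degree of `λ` equals `-∑_{p < q} ⌊(λ_p - λ_q) / r⌋`, so it depends on `λ` alone, and every step
`λ ↦ λ^α` raises it by at least one. A two-step path along which the degree rises by two is
therefore automatically admissible, and the other path to the same endpoint only has to be found
modulo `r`. It is legitimate as soon as its coefficients lie strictly between `0` and `r`:
* if `(α, β) = 1`, this means `m + m' < r`, where `m = m_α(λ)` and `m' = m_β(λ^α)`; otherwise the
  exchanged path would climb from `λ` to `λ^{α,β} + rδ` for a positive root `δ`, although the degree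
  of that vector is at most that of `λ`;
* if `(α, β) = -1`, this means `m ≠ m'`; otherwise the endpoint would also be reached in the single
  step `λ ↦ λ^{α+β}`, against the sign of the permutation.

Conversely, `Λ` has trivial stabilizer in the affine Weyl group, so two paths with the same endpoint
give the same product of two transpositions. Besides `(α, β)` itself, only its two Hurwitz moves
are possible up to signs of roots, and the positivity of the coefficients in
`λ - λ^{α,β} = mα + m'β` fixes the signs and leaves exactly one path.
-/

open Finset Equiv

section Swap

variable {ι : Type*} [DecidableEq ι] {i j k l p q s t : ι}

theorem swap_eq_or_swap_eq_of_mul_eq_mul (hij : i ≠ j) (hkl : k ≠ l) (hpq : p ≠ q) (hst : s ≠ t)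
    (h : swap k l * swap i j = swap s t * swap p q) (hne : swap i j ≠ swap k l)
    (hne' : swap p q ≠ swap i j) : swap p q = swap k l ∨ swap s t = swap i j := by
  -- It is enough to compare both products at the points that occur in them.
  have apply_eq (u : ι) : swap k l (swap i j u) = swap s t (swap p q u) := congrArg (· u) h
  have at_i := apply_eq i
  have at_j := apply_eq j
  have at_k := apply_eq k
  have at_l := apply_eq l
  have at_p := apply_eq p
  have at_q := apply_eq q
  clear apply_eq
  simp only [swap_apply_def] at at_i at_j at_k at_l at_p at_q
  have comm_ij := swap_comm i j
  have comm_kl := swap_comm k l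
  have comm_pq := swap_comm p q
  have comm_st := swap_comm s t
  grind (splits := 40)

theorem hurwitz_of_swap_mul_swap_eq (hij : i ≠ j) (hkl : k ≠ l) (hpq : p ≠ q) (hst : s ≠ t)
    (h : swap k l * swap i j = swap s t * swap p q) (hne : swap i j ≠ swap k l)
    (hne' : swap p q ≠ swap i j) :
    (swap p q = swap k l ∧ swap s t = swap (swap k l i) (swap k l j)) ∨
      (swap s t = swap i j ∧ swap p q = swap (swap i j k) (swap i j l)) := by
  refine (swap_eq_or_swap_eq_of_mul_eq_mul hij hkl hpq hst h hne hne').imp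
    (fun hpq => ⟨hpq, ?_⟩) (fun hst => ⟨hst, ?_⟩)
  · rw [hpq] at h
    rw [swap_apply_apply, h, swap_inv, mul_assoc, swap_mul_self, mul_one]
  · rw [hst] at h
    rw [swap_apply_apply, swap_inv, mul_assoc, h, swap_mul_self_mul]

theorem swap_eq_swap_iff (hpq : p ≠ q) :
    swap p q = swap s t ↔ p = s ∧ q = t ∨ p = t ∧ q = s := by
  refine ⟨fun h => ?_, ?_⟩
  · have at_p : q = swap s t p := by rw [← h, swap_apply_left]
    grind
  · rintro (⟨rfl, rfl⟩ | ⟨rfl, rfl⟩)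
    exacts [rfl, swap_comm _ _]

end Swap

section Roots

variable {n : ℕ} {i j k l p q s t : Fin n}

theorem pairing_comm (v w : Fin n → ℝ) : pairing v w = pairing w v :=
  dotProduct_comm v w

theorem pairing_add_left (v w x : Fin n → ℝ) : pairing (v + w) x = pairing v x + pairing w x :=
  add_dotProduct v w x

theorem pairing_sub_left (v w x : Fin n → ℝ) : pairing (v - w) x = pairing v x - pairing w x :=
  sub_dotProduct v w x

theorem pairing_smul_left (c : ℝ) (v w : Fin n → ℝ) : pairing (c • v) w = c * pairing v w :=
  smul_dotProduct c v w

theorem pairing_add_right (v w x : Fin n → ℝ) : pairing v (w + x) = pairing v w + pairing v x :=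
  dotProduct_add v w x

theorem pairing_sub_right (v w x : Fin n → ℝ) : pairing v (w - x) = pairing v w - pairing v x :=
  dotProduct_sub v w x

theorem smul_add_smul_inj {α β : Fin n → ℝ} {a b c d : ℝ} (hα : pairing α α = 2)
    (hβ : pairing β β = 2) (hαβ : pairing α β ^ 2 < 4) (h : a • α + b • β = c • α + d • β) :
    a = c ∧ b = d := by
  have along_α := congrArg (pairing · α) h
  have along_β := congrArg (pairing · β) h
  simp only [pairing_add_left, pairing_smul_left, pairing_comm β α, hα, hβ] at along_α along_β
  have hdet : pairing α β ^ 2 - 4 ≠ 0 := (sub_neg.2 hαβ).ne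
  constructor <;> apply mul_right_cancel₀ hdet
  · linear_combination pairing α β * along_β - 2 * along_α
  · linear_combination pairing α β * along_α - 2 * along_β

theorem eq_reflection_of_smul_add_smul_eq {α β δ : Fin n → ℝ} {a b c d : ℝ} (hα : pairing α α = 2)
    (hβ : pairing β β = 2) (hαβ : pairing α β ^ 2 < 4) (ha : 0 < a) (hd : 0 < d)
    (hδ : δ = α - pairing α β • β ∨ δ = -(α - pairing α β • β))
    (h : a • α + b • β = c • β + d • δ) : δ = α - pairing α β • β ∧ c = b + a * pairing α β := by
  rcases hδ with rfl | rfl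
  · obtain ⟨rfl, hb⟩ := smul_add_smul_inj (c := d) (d := c - d * pairing α β) hα hβ hαβ
      (by rw [h]; module)
    exact ⟨rfl, by linarith⟩
  · obtain ⟨had, -⟩ := smul_add_smul_inj (c := -d) (d := c + d * pairing α β) hα hβ hαβ
      (by rw [h]; module)
    linarith

theorem rootv_self_left {i j : Fin n} (hij : i ≠ j) : rootv n i j i = 1 := by
  simp [rootv, hij]

theorem rootv_self_right {i j : Fin n} (hij : i ≠ j) : rootv n i j j = -1 := by
  simp [rootv, hij.symm]

theorem rootv_of_ne {i j t : Fin n} (hi : t ≠ i) (hj : t ≠ j) : rootv n i j t = 0 := by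
  simp [rootv, hi, hj]

theorem rootv_swap (p q : Fin n) : rootv n q p = -rootv n p q := by
  funext t; simp [rootv]

theorem rootv_add_rootv (p q s : Fin n) : rootv n p q + rootv n q s = rootv n p s := by
  funext t; simp [rootv]

theorem rootv_inj (hpq : p ≠ q) (h : rootv n p q = rootv n s t) : p = s ∧ q = t := by
  have at_p := congrFun h p
  have at_q := congrFun h q
  simp only [rootv] at at_p at_q
  grind

theorem pairing_rootv (v : Fin n → ℝ) (i j : Fin n) : pairing v (rootv n i j) = v i - v j := by
  simp [pairing, rootv, mul_sub]

theorem pairing_rootv_self (hij : i ≠ j) : pairing (rootv n i j) (rootv n i j) = 2 := by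
  rw [pairing_rootv, rootv_self_left hij, rootv_self_right hij]; norm_num

theorem rootv_swap_apply (hkl : k ≠ l) : rootv n (swap k l i) (swap k l j) =
    rootv n i j - pairing (rootv n i j) (rootv n k l) • rootv n k l := by
  funext t
  simp only [pairing_rootv, Pi.sub_apply, Pi.smul_apply, smul_eq_mul]
  grind [rootv]

theorem eq_of_swap_eq_of_lt (hpq : p < q) (hst : s < t) (h : swap p q = swap s t) :
    p = s ∧ q = t :=
  ((swap_eq_swap_iff hpq.ne).1 h).resolve_right fun ⟨hpt, hqs⟩ => hpq.not_gt (hpt ▸ hqs ▸ hst)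

theorem rootv_eq_or_eq_neg_of_swap_eq (hpq : p ≠ q) (h : swap p q = swap s t) :
    rootv n p q = rootv n s t ∨ rootv n p q = -rootv n s t := by
  rcases (swap_eq_swap_iff hpq).1 h with ⟨rfl, rfl⟩ | ⟨rfl, rfl⟩
  exacts [.inl rfl, .inr (rootv_swap _ _)]

theorem pairing_eq_one_of_sub_eq_rootv (hij : i ≠ j) (hkl : k ≠ l) (hpq : p ≠ q)
    (h : rootv n i j - rootv n k l = rootv n p q) : pairing (rootv n i j) (rootv n k l) = 1 := by
  have norm := pairing_rootv_self hpq
  rw [← h, pairing_sub_left, pairing_sub_right, pairing_sub_right, pairing_rootv_self hij,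
    pairing_rootv_self hkl, pairing_comm (rootv n k l)] at norm
  linarith

theorem pairing_eq_neg_one_of_add_eq_rootv (hij : i ≠ j) (hkl : k ≠ l) (hpq : p ≠ q)
    (h : rootv n i j + rootv n k l = rootv n p q) : pairing (rootv n i j) (rootv n k l) = -1 := by
  have norm := pairing_rootv_self hpq
  rw [← h, pairing_add_left, pairing_add_right, pairing_add_right, pairing_rootv_self hij,
    pairing_rootv_self hkl, pairing_comm (rootv n k l)] at norm
  linarith

theorem orthogonal_or_sub_or_add_eq_rootv (hij : i < j) (hkl : k < l) (hne : (i, j) ≠ (k, l)) :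
    pairing (rootv n i j) (rootv n k l) = 0 ∨ ∃ p q, p < q ∧
      (rootv n i j - rootv n k l = rootv n p q ∨ rootv n k l - rootv n i j = rootv n p q ∨
        rootv n i j + rootv n k l = rootv n p q) := by
  simp only [sub_eq_iff_eq_add']
  by_cases hjk : j = k
  · subst hjk
    exact .inr ⟨i, l, hij.trans hkl, .inr (.inr (rootv_add_rootv ..))⟩
  by_cases hil : i = l
  · subst hil
    exact .inr ⟨k, j, hkl.trans hij, .inr (.inr (by rw [add_comm, rootv_add_rootv]))⟩
  by_cases hik : i = k
  · subst hik
    rcases lt_trichotomy j l with hjl | rfl | hlj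
    · exact .inr ⟨j, l, hjl, .inr (.inl (rootv_add_rootv ..).symm)⟩
    · exact absurd rfl hne
    · exact .inr ⟨l, j, hlj, .inl (rootv_add_rootv ..).symm⟩
  by_cases hjl : j = l
  · subst hjl
    rcases lt_or_gt_of_ne hik with hik | hki
    · exact .inr ⟨i, k, hik, .inl (by rw [add_comm, rootv_add_rootv])⟩
    · exact .inr ⟨k, i, hki, .inr (.inl (by rw [add_comm, rootv_add_rootv]))⟩
  · left
    rw [pairing_rootv, rootv_of_ne (Ne.symm hik) (Ne.symm hjk),
      rootv_of_ne (Ne.symm hil) (Ne.symm hjl), sub_zero]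

theorem pairing_rootv_cases (hij : i < j) (hkl : k < l) (hne : (i, j) ≠ (k, l)) :
    pairing (rootv n i j) (rootv n k l) = 0 ∨ pairing (rootv n i j) (rootv n k l) = 1 ∨
      pairing (rootv n i j) (rootv n k l) = -1 := by
  rcases orthogonal_or_sub_or_add_eq_rootv hij hkl hne with h | ⟨p, q, hpq, h | h | h⟩
  · exact .inl h
  · exact .inr (.inl (pairing_eq_one_of_sub_eq_rootv hij.ne hkl.ne hpq.ne h))
  · exact .inr (.inl (pairing_comm _ _ ▸ pairing_eq_one_of_sub_eq_rootv hkl.ne hij.ne hpq.ne h))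
  · exact .inr (.inr (pairing_eq_neg_one_of_add_eq_rootv hij.ne hkl.ne hpq.ne h))

end Roots

section Degree

variable {n : ℕ}

/-- The signed number of walls `(·, ε_p - ε_q) ∈ rℤ` separating `λ` from the fundamental alcove,
for a positive root `ε_p - ε_q`; set to `0` for `q ≤ p` so that it can be summed over all pairs. -/
noncomputable def wallCount (r : ℝ) (lam : Fin n → ℝ) (p q : Fin n) : ℤ :=
  if p < q then ⌊(lam p - lam q) / r⌋ else 0

/-- The degree `ℓ(σ) - 2|γ₀|` of `λ = σΛ + rγ₀`, written in terms of `λ` alone so that it makes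
sense for every vector. -/
noncomputable def degree (r : ℝ) (lam : Fin n → ℝ) : ℤ :=
  -∑ p, ∑ q, wallCount r lam p q

theorem sum_sum_eq_add_compl_pair {ι M : Type*} [Fintype ι] [DecidableEq ι]
    [AddCommMonoid M] {i j : ι} (hij : i ≠ j) (f : ι → ι → M) :
    ∑ p, ∑ q, f p q = (f i i + f i j + f j i + f j j) +
      (∑ t ∈ {i, j}ᶜ, (f i t + f j t + f t i + f t j) +
        ∑ p ∈ {i, j}ᶜ, ∑ q ∈ {i, j}ᶜ, f p q) := by
  have split (g : ι → M) : ∑ t, g t = g i + g j + ∑ t ∈ {i, j}ᶜ, g t := by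
    rw [← sum_add_sum_compl {i, j}, sum_pair hij]
  simp only [split, sum_add_distrib]
  abel

theorem degree_add_intCast {r : ℝ} (hr : r ≠ 0) (lam : Fin n → ℝ) (γ : Fin n → ℤ) :
    degree r (fun t => lam t + r * γ t) =
      degree r lam - ∑ p, ∑ q, if p < q then γ p - γ q else 0 := by
  have shift (p q : Fin n) :
      ⌊(lam p + r * γ p - (lam q + r * γ q)) / r⌋ = ⌊(lam p - lam q) / r⌋ + (γ p - γ q) := by
    rw [← Int.floor_add_intCast]
    congr 1
    push_cast
    field_simp
    ring
  rw [degree, degree, ← neg_add', ← sum_add_distrib]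
  simp_rw [wallCount, ← sum_add_distrib, shift, ite_add_ite, add_zero]

theorem sum_sum_ite_lt_sub (g : Fin n → ℤ) :
    (∑ p, ∑ q, if p < q then g p - g q else 0) = ∑ t : Fin n, ((n : ℤ) - 1 - 2 * t) * g t := by
  have split (p q : Fin n) : (if p < q then g p - g q else 0) =
      (if p < q then g p else 0) - if p < q then g q else 0 := by
    split_ifs <;> simp
  simp_rw [split, sum_sub_distrib]
  rw [sum_comm (f := fun p q => if p < q then g q else 0), ← sum_sub_distrib]
  refine sum_congr rfl fun t _ => ?_
  rw [← sum_filter, ← sum_filter, sum_const, sum_const, filter_lt_eq_Ioi, filter_gt_eq_Iio,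
    Fin.card_Ioi, Fin.card_Iio, nsmul_eq_mul, nsmul_eq_mul]
  have := t.isLt
  rw [← sub_mul]
  congr 1
  omega

theorem degree_add_smul_rootv {r : ℝ} (hr : r ≠ 0) (lam : Fin n → ℝ) (e : ℤ) (i j : Fin n) :
    degree r (lam + (r * e) • rootv n i j) = degree r lam - 2 * e * (j - i) := by
  have key := degree_add_intCast hr lam
    fun t => e * ((if t = i then 1 else 0) - (if t = j then 1 else 0))
  rw [sum_sum_ite_lt_sub] at key
  convert key using 2
  · funext t
    simp only [Pi.add_apply, Pi.smul_apply, rootv, smul_eq_mul, Int.cast_mul, Int.cast_sub,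
      Int.cast_ite, Int.cast_one, Int.cast_zero]
    ring
  · simp only [mul_sub, mul_ite, mul_one, mul_zero, sum_sub_distrib, sum_ite_eq', mem_univ,
      ↓reduceIte]
    ring

theorem invCount_symm (σ : Perm (Fin n)) : invCount σ.symm = invCount σ := by
  refine card_nbij' (fun p => (σ.symm p.2, σ.symm p.1)) (fun p => (σ p.2, σ p.1)) ?_ ?_ ?_ ?_ <;>
    intro p <;> simp +contextual

theorem isM.modulus_pos {r m : ℤ} {lam al : Fin n → ℝ} (h : isM r lam al m) : (0 : ℝ) < r := by
  exact_mod_cast h.1.trans h.2.1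

theorem floor_add_mul_div {r : ℝ} (hr : r ≠ 0) (x : ℝ) (c : ℤ) :
    ⌊(x + r * c) / r⌋ = ⌊x / r⌋ + c := by
  rw [← Int.floor_add_intCast, add_div, mul_div_cancel_left₀ _ hr]

theorem floor_sub_mul_div {r : ℝ} (hr : r ≠ 0) (x : ℝ) (c : ℤ) :
    ⌊(x - r * c) / r⌋ = ⌊x / r⌋ - c := by
  rw [← Int.floor_sub_intCast, sub_div, mul_div_cancel_left₀ _ hr]

section AffineReflection

variable {r : ℝ} (hr : 0 < r) {x y : Fin n → ℝ} {i j : Fin n} {c : ℤ}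
  (hlo : r * c < x i - x j) (hi : y i = x j + r * c) (hj : y j = x i - r * c)

include hr hlo hi hj

theorem wallCount_affineReflection (hhi : x i - x j < r * c + r) (hij : i < j) :
    wallCount r y i j + 1 = wallCount r x i j := by
  have h₁ : ⌊(x i - x j) / r⌋ = c := by
    rw [Int.floor_eq_iff, le_div_iff₀ hr, div_lt_iff₀ hr]
    constructor <;> linarith
  have h₂ : ⌊(y i - y j) / r⌋ = c - 1 := by
    rw [Int.floor_eq_iff, le_div_iff₀ hr, div_lt_iff₀ hr, hi, hj]
    push_cast
    constructor <;> linarith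
  rw [wallCount, wallCount, if_pos hij, if_pos hij, h₁, h₂, sub_add_cancel]

theorem wallCount_cross_affineReflection_le {t : Fin n} (hij : i < j) (hti : t ≠ i) (htj : t ≠ j)
    (ht : y t = x t) :
    wallCount r y i t + wallCount r y j t + wallCount r y t i + wallCount r y t j ≤
      wallCount r x i t + wallCount r x j t + wallCount r x t i + wallCount r x t j := by
  rcases hti.lt_or_gt with hti | hit
  · have h₁ : ⌊(x t - y i) / r⌋ = ⌊(x t - x j) / r⌋ - c := by
      rw [← floor_sub_mul_div hr.ne', hi, sub_sub]
    have h₂ : ⌊(x t - y j) / r⌋ = ⌊(x t - x i) / r⌋ + c := by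
      rw [← floor_add_mul_div hr.ne', hj, sub_sub_eq_add_sub, add_sub_right_comm]
    simp only [wallCount, if_neg hti.not_gt, if_pos hti, if_neg (hti.trans hij).not_gt,
      if_pos (hti.trans hij), ht, h₁, h₂]
    lia
  rcases htj.lt_or_gt with htj | hjt
  · have h₁ : ⌊(y i - x t) / r⌋ ≤ ⌊(x i - x t) / r⌋ := by gcongr; linarith
    have h₂ : ⌊(x t - y j) / r⌋ ≤ ⌊(x t - x j) / r⌋ := by gcongr; linarith
    simp [wallCount, hit.not_gt, hit, htj.not_gt, htj, ht, h₁, h₂, add_le_add]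
  · have h₁ : ⌊(y i - x t) / r⌋ = ⌊(x j - x t) / r⌋ + c := by
      rw [← floor_add_mul_div hr.ne', hi, add_sub_right_comm]
    have h₂ : ⌊(y j - x t) / r⌋ = ⌊(x i - x t) / r⌋ - c := by
      rw [← floor_sub_mul_div hr.ne', hj, sub_right_comm]
    simp only [wallCount, if_neg hjt.not_gt, if_pos hjt, if_neg (hij.trans hjt).not_gt,
      if_pos (hij.trans hjt), ht, h₁, h₂]
    lia

theorem degree_add_one_le_of_affineReflection (hhi : x i - x j < r * c + r) (hij : i < j)
    (hy : ∀ t, t ≠ i → t ≠ j → y t = x t) : degree r x + 1 ≤ degree r y := by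
  have hy' {t : Fin n} (ht : t ∈ ({i, j} : Finset (Fin n))ᶜ) : t ≠ i ∧ t ≠ j := by
    simpa using ht
  have pair := wallCount_affineReflection hr hlo hi hj hhi hij
  have cross := sum_le_sum fun t (ht : t ∈ ({i, j} : Finset (Fin n))ᶜ) =>
    wallCount_cross_affineReflection_le hr hlo hi hj hij (hy' ht).1 (hy' ht).2
      (hy t (hy' ht).1 (hy' ht).2)
  have rest : ∑ p ∈ {i, j}ᶜ, ∑ q ∈ {i, j}ᶜ, wallCount r y p q =
      ∑ p ∈ {i, j}ᶜ, ∑ q ∈ {i, j}ᶜ, wallCount r x p q :=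
    sum_congr rfl fun p hp => sum_congr rfl fun q hq => by
      simp only [wallCount, hy _ (hy' hp).1 (hy' hp).2, hy _ (hy' hq).1 (hy' hq).2]
  have corner (z : Fin n → ℝ) : wallCount r z i i + wallCount r z i j + wallCount r z j i +
      wallCount r z j j = wallCount r z i j := by
    simp [wallCount, hij.not_gt]
  rw [degree, degree, sum_sum_eq_add_compl_pair hij.ne, sum_sum_eq_add_compl_pair hij.ne, rest,
    corner, corner]
  linarith

end AffineReflection

theorem degree_add_one_le_of_isM {r m : ℤ} {lam : Fin n → ℝ} {i j : Fin n} (hij : i < j)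
    (h : isM r lam (rootv n i j) m) :
    degree r lam + 1 ≤ degree r (lam - (m : ℝ) • rootv n i j) := by
  have hr := h.modulus_pos
  obtain ⟨hm₀, hmr, c, hc⟩ := h
  rw [pairing_rootv] at hc
  have hm₀' : (0 : ℝ) < m := by exact_mod_cast hm₀
  have hmr' : (m : ℝ) < r := by exact_mod_cast hmr
  refine degree_add_one_le_of_affineReflection (i := i) (j := j) (c := c) hr (by linarith) ?_ ?_
    (by linarith) hij fun t hi hj => ?_
  · rw [Pi.sub_apply, Pi.smul_apply, rootv_self_left hij.ne, smul_eq_mul]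
    linarith
  · rw [Pi.sub_apply, Pi.smul_apply, rootv_self_right hij.ne, smul_eq_mul]
    linarith
  · simp [rootv_of_ne hi hj]

end Degree

section AffineOrbit

variable {n : ℕ}

/-- `Λ` is strictly dominant and lies in the open fundamental alcove `(Λ, θ) < r`. -/
def InAlcove (r : ℝ) (Λ : Fin n → ℝ) : Prop :=
  ∀ a b : Fin n, a < b → 0 < Λ a - Λ b ∧ Λ a - Λ b < r

/-- `λ = σΛ + rγ` for some translation `γ`, which may be any vector of `ℤⁿ` and not only one of the
root lattice `∑ γ_t = 0`. -/
def InAffineOrbit (r : ℝ) (Λ : Fin n → ℝ) (σ : Perm (Fin n)) (lam : Fin n → ℝ) : Prop :=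
  ∃ γ : Fin n → ℤ, lam = fun t => Λ (σ.symm t) + r * γ t

variable {r : ℝ} {Λ lam : Fin n → ℝ} {σ τ : Perm (Fin n)}

theorem InAlcove.eq_of_sub_eq_mul (hΛ : InAlcove r Λ) {a b : Fin n} {e : ℤ}
    (h : Λ a - Λ b = r * e) : a = b := by
  wlog hab : a ≤ b generalizing a b e
  · exact (this (e := -e) (by push_cast; linarith) (le_of_not_ge hab)).symm
  by_contra hne
  obtain ⟨hpos, hlt⟩ := hΛ a b (lt_of_le_of_ne hab hne)
  have hr : 0 < r := hpos.trans hlt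
  rw [h] at hpos hlt
  have h₀ : (0 : ℝ) < e := pos_of_mul_pos_right hpos hr.le
  have h₁ : (e : ℝ) < 1 := by rwa [mul_lt_iff_lt_one_right hr] at hlt
  norm_cast at h₀ h₁
  lia

theorem InAffineOrbit.perm_unique (hΛ : InAlcove r Λ) (hσ : InAffineOrbit r Λ σ lam)
    (hτ : InAffineOrbit r Λ τ lam) : σ = τ := by
  obtain ⟨γ, rfl⟩ := hσ
  obtain ⟨δ, hδ⟩ := hτ
  rw [← symm_bijective.injective.eq_iff]
  ext1 t
  apply hΛ.eq_of_sub_eq_mul (e := δ t - γ t)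
  push_cast
  linarith [congrFun hδ t]

theorem InAlcove.sub_lt (hΛ : InAlcove r Λ) (hr : 0 < r) (a b : Fin n) : Λ a - Λ b < r := by
  rcases lt_trichotomy a b with hab | rfl | hba
  · exact (hΛ a b hab).2
  · simpa using hr
  · linarith [(hΛ b a hba).1]

theorem InAlcove.wallCount_comp_symm (hΛ : InAlcove r Λ) {p q : Fin n} (hpq : p < q) :
    wallCount r (fun t => Λ (σ.symm t)) p q = -if σ.symm q < σ.symm p then 1 else 0 := by
  rw [wallCount, if_pos hpq]
  split_ifs with h
  · obtain ⟨hpos, hlt⟩ := hΛ _ _ h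
    rw [Int.floor_eq_iff, le_div_iff₀ (hpos.trans hlt), div_lt_iff₀ (hpos.trans hlt)]
    push_cast
    constructor <;> linarith
  · obtain ⟨hpos, hlt⟩ := hΛ _ _ ((σ.symm.injective.ne hpq.ne).lt_of_le (le_of_not_gt h))
    rw [Int.floor_eq_iff, le_div_iff₀ (hpos.trans hlt), div_lt_iff₀ (hpos.trans hlt)]
    push_cast
    constructor <;> linarith

theorem InAlcove.degree_comp_symm (hΛ : InAlcove r Λ) (σ : Perm (Fin n)) :
    degree r (fun t => Λ (σ.symm t)) = invCount σ := by
  rw [← invCount_symm, invCount, card_filter, ← univ_product_univ, sum_product, degree,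
    ← sum_neg_distrib]
  push_cast
  refine sum_congr rfl fun p _ => ?_
  rw [← sum_neg_distrib]
  refine sum_congr rfl fun q _ => ?_
  by_cases hpq : p < q
  · rw [hΛ.wallCount_comp_symm hpq]
    simp [hpq]
  · simp [wallCount, hpq]

end AffineOrbit

section Step

variable {n : ℕ} {r m : ℤ} {Λ lam : Fin n → ℝ} {σ : Perm (Fin n)} {i j : Fin n}

theorem sub_smul_rootv_eq {γ : Fin n → ℤ} {e : ℤ} (hij : i ≠ j)
    (hm : (m : ℝ) = Λ (σ.symm i) - Λ (σ.symm j) + r * e) :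
    (fun t => Λ (σ.symm t) + r * γ t) - (m : ℝ) • rootv n i j =
      (fun t => Λ ((swap i j * σ).symm t) + (r : ℝ) * γ t) +
        ((r : ℝ) * (-e : ℤ)) • rootv n i j := by
  funext t
  by_cases hi : t = i
  · subst hi
    simp only [Pi.sub_apply, Pi.add_apply, Pi.smul_apply, smul_eq_mul, rootv_self_left hij, hm,
      Perm.mul_def, symm_trans, symm_swap, trans_apply, swap_apply_left, Int.cast_neg]
    ring
  by_cases hj : t = j
  · subst hj
    simp only [Pi.sub_apply, Pi.add_apply, Pi.smul_apply, smul_eq_mul, rootv_self_right hij, hm,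
      Perm.mul_def, symm_trans, symm_swap, trans_apply, swap_apply_right, Int.cast_neg]
    ring
  simp [rootv_of_ne hi hj, swap_apply_of_ne_of_ne hi hj, Perm.mul_def]

theorem isM.exists_eq_add_mul {γ : Fin n → ℤ}
    (hm : isM r (fun t => Λ (σ.symm t) + r * γ t) (rootv n i j) m) :
    ∃ e : ℤ, (m : ℝ) = Λ (σ.symm i) - Λ (σ.symm j) + r * e := by
  obtain ⟨-, -, c, hc⟩ := hm
  rw [pairing_rootv] at hc
  exact ⟨γ i - γ j - c, by push_cast; linarith⟩

theorem InAffineOrbit.sub_smul_rootv (hlam : InAffineOrbit r Λ σ lam) (hij : i ≠ j)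
    (hm : isM r lam (rootv n i j) m) :
    InAffineOrbit r Λ (swap i j * σ) (lam - (m : ℝ) • rootv n i j) := by
  obtain ⟨γ, rfl⟩ := hlam
  obtain ⟨e, he⟩ := hm.exists_eq_add_mul
  rw [sub_smul_rootv_eq hij he]
  refine ⟨fun t => γ t - e * ((if t = i then 1 else 0) - if t = j then 1 else 0), ?_⟩
  funext t
  simp only [Pi.add_apply, Pi.smul_apply, smul_eq_mul, rootv, Int.cast_neg, Int.cast_sub,
    Int.cast_mul, Int.cast_ite, Int.cast_one, Int.cast_zero]
  ring

theorem dval_eq_degree_sub (hΛ : InAlcove r Λ) (hlam : InAffineOrbit r Λ σ lam) (hij : i ≠ j)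
    (hm : isM r lam (rootv n i j) m) :
    dval Λ σ i j = degree r (lam - (m : ℝ) • rootv n i j) - degree r lam := by
  obtain ⟨γ, rfl⟩ := hlam
  obtain ⟨e, he⟩ := hm.exists_eq_add_mul
  have hr := hm.modulus_pos
  rw [sub_smul_rootv_eq hij he, degree_add_smul_rootv hr.ne', degree_add_intCast hr.ne',
    degree_add_intCast hr.ne', hΛ.degree_comp_symm, hΛ.degree_comp_symm, dval]
  obtain ⟨hm₀, hmr, -⟩ := hm
  have hm₀' : (0 : ℝ) < m := by exact_mod_cast hm₀
  have hmr' : (m : ℝ) < r := by exact_mod_cast hmr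
  have bounds (x : ℤ) : (r : ℝ) * x < r * e → x < e := fun h => by
    exact_mod_cast lt_of_mul_lt_mul_left h hr.le
  have bounds' (x : ℤ) : (r : ℝ) * e < r * x → e < x := fun h => by
    exact_mod_cast lt_of_mul_lt_mul_left h hr.le
  have hlt := hΛ.sub_lt hr (σ.symm i) (σ.symm j)
  have hgt := hΛ.sub_lt hr (σ.symm j) (σ.symm i)
  split_ifs with h
  · obtain rfl : e = 0 := by
      have := bounds (-1) (by push_cast; linarith)
      have := bounds' 1 (by push_cast; linarith)
      lia
    ring
  · obtain rfl : e = 1 := by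
      have := bounds 0 (by push_cast; linarith)
      have := bounds' 2 (by push_cast; linarith)
      lia
    ring

end Step

section TwoStep

variable {n : ℕ} {r m m' : ℤ} {Λ lam endv α β : Fin n → ℝ} {σ : Perm (Fin n)} {i j k l p q : Fin n}

/-- The path `λ ↦ λ^α ↦ λ^{α,β} = endv`, with `m = m_α(λ)` and `m' = m_β(λ^α)`; nothing is required
of the degrees. -/
def IsTwoStep (r : ℤ) (lam endv α β : Fin n → ℝ) (m m' : ℤ) : Prop :=
  isM r lam α m ∧ isM r (lam - (m : ℝ) • α) β m' ∧ endv = lam - (m : ℝ) • α - (m' : ℝ) • β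

theorem IsTwoStep.inAffineOrbit (h : IsTwoStep r lam endv (rootv n i j) (rootv n k l) m m')
    (hlam : InAffineOrbit r Λ σ lam) (hij : i ≠ j) (hkl : k ≠ l) :
    InAffineOrbit r Λ (swap k l * (swap i j * σ)) endv := by
  obtain ⟨hm, hm', rfl⟩ := h
  exact (hlam.sub_smul_rootv hij hm).sub_smul_rootv hkl hm'

theorem admSq_iff (hΛ : InAlcove r Λ) (hlam : InAffineOrbit r Λ σ lam) :
    AdmSq n r Λ σ lam endv i j k l ↔ i < j ∧ k < l ∧ degree r endv = degree r lam + 2 ∧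
      ∃ m m', IsTwoStep r lam endv (rootv n i j) (rootv n k l) m m' := by
  constructor
  · rintro ⟨hij, hkl, had₁, had₂, m, m', hm, hm', rfl⟩
    have h₁ := dval_eq_degree_sub hΛ hlam hij.ne hm
    have h₂ := dval_eq_degree_sub hΛ (hlam.sub_smul_rootv hij.ne hm) hkl.ne hm'
    refine ⟨hij, hkl, ?_, m, m', hm, hm', rfl⟩
    change degree r (lam - (m : ℝ) • rootv n i j - (m' : ℝ) • rootv n k l) = _
    lia
  · rintro ⟨hij, hkl, hdeg, m, m', hm, hm', rfl⟩
    have h₁ := dval_eq_degree_sub hΛ hlam hij.ne hm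
    have h₂ := dval_eq_degree_sub hΛ (hlam.sub_smul_rootv hij.ne hm) hkl.ne hm'
    have le₁ := degree_add_one_le_of_isM hij hm
    have le₂ := degree_add_one_le_of_isM hkl hm'
    exact ⟨hij, hkl, by lia, by lia, m, m', hm, hm', rfl⟩

theorem isTwoStep_iff : IsTwoStep r lam endv α β m m' ↔
    (0 < m ∧ m < r) ∧ (0 < m' ∧ m' < r) ∧
      (∃ a : ℤ, pairing lam α = m + r * a) ∧
      (∃ b : ℤ, pairing lam β = m' + m * pairing α β + r * b) ∧
      endv = lam - (m : ℝ) • α - (m' : ℝ) • β := by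
  have residue (b : ℤ) : pairing (lam - (m : ℝ) • α) β = m' + r * b ↔
      pairing lam β = m' + m * pairing α β + r * b := by
    rw [pairing_sub_left, pairing_smul_left, sub_eq_iff_eq_add, add_right_comm]
  simp only [IsTwoStep, isM, residue]
  tauto

theorem IsTwoStep.comm_of_orthogonal (h : IsTwoStep r lam endv α β m m') (hαβ : pairing α β = 0) :
    IsTwoStep r lam endv β α m' m := by
  rw [isTwoStep_iff] at h ⊢
  rw [pairing_comm β α]
  simp only [hαβ, mul_zero, add_zero] at h ⊢
  obtain ⟨hm, hm', ha, hb, rfl⟩ := h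
  exact ⟨hm', hm, hb, ha, sub_right_comm ..⟩

theorem IsTwoStep.sub_right (h : IsTwoStep r lam endv α β m m') (hβ : pairing β β = 2)
    (hαβ : pairing α β = 1) (hlt : m + m' < r) :
    IsTwoStep r lam endv β (α - β) (m + m') m := by
  rw [isTwoStep_iff] at h ⊢
  obtain ⟨hm, hm', ⟨a, ha⟩, ⟨b, hb⟩, rfl⟩ := h
  refine ⟨⟨by lia, hlt⟩, hm, ⟨b, ?_⟩, ⟨a - b, ?_⟩, ?_⟩
  · rw [hb, hαβ]; push_cast; ring
  · rw [pairing_sub_right, pairing_sub_right, pairing_comm β α, ha, hb, hαβ, hβ]; push_cast; ring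
  · push_cast; module

theorem IsTwoStep.sub_left (h : IsTwoStep r lam endv α β m m') (hα : pairing α α = 2)
    (hαβ : pairing α β = 1) (hlt : m + m' < r) :
    IsTwoStep r lam endv (β - α) α m' (m + m') := by
  rw [isTwoStep_iff] at h ⊢
  obtain ⟨hm, hm', ⟨a, ha⟩, ⟨b, hb⟩, rfl⟩ := h
  refine ⟨hm', ⟨by lia, hlt⟩, ⟨b - a, ?_⟩, ⟨a, ?_⟩, ?_⟩
  · rw [pairing_sub_right, ha, hb, hαβ]; push_cast; ring
  · rw [pairing_sub_left, pairing_comm β α, ha, hαβ, hα]; push_cast; ring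
  · push_cast; module

theorem IsTwoStep.add_left (h : IsTwoStep r lam endv α β m m') (hα : pairing α α = 2)
    (hαβ : pairing α β = -1) (hlt : m' < m) :
    IsTwoStep r lam endv (α + β) α m' (m - m') := by
  rw [isTwoStep_iff] at h ⊢
  obtain ⟨hm, hm', ⟨a, ha⟩, ⟨b, hb⟩, rfl⟩ := h
  refine ⟨hm', ⟨by lia, by lia⟩, ⟨a + b, ?_⟩, ⟨a, ?_⟩, ?_⟩
  · rw [pairing_add_right, ha, hb, hαβ]; push_cast; ring
  · rw [pairing_add_left, pairing_comm β α, ha, hαβ, hα]; push_cast; ring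
  · push_cast; module

theorem IsTwoStep.add_right (h : IsTwoStep r lam endv α β m m') (hβ : pairing β β = 2)
    (hαβ : pairing α β = -1) (hlt : m < m') :
    IsTwoStep r lam endv β (α + β) (m' - m) m := by
  rw [isTwoStep_iff] at h ⊢
  obtain ⟨hm, hm', ⟨a, ha⟩, ⟨b, hb⟩, rfl⟩ := h
  refine ⟨⟨by lia, by lia⟩, hm, ⟨b, ?_⟩, ⟨a + b, ?_⟩, ?_⟩
  · rw [hb, hαβ]; push_cast; ring
  · rw [pairing_add_right, pairing_add_right, pairing_comm β α, ha, hb, hαβ, hβ]; push_cast; ring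
  · push_cast; module

theorem degree_le_of_residue (hij : i < j) (hm₀ : 0 ≤ m) (hmr : m < r) {c : ℤ}
    (hc : pairing lam (rootv n i j) = m + r * c) :
    degree r lam ≤ degree r (lam - (m : ℝ) • rootv n i j) := by
  rcases hm₀.eq_or_lt with rfl | hm₀
  · simp
  · linarith [degree_add_one_le_of_isM hij ⟨hm₀, hmr, c, hc⟩]

theorem degree_add_smul_rootv_add_two_le {c : ℝ} (hc : c ≠ 0) (lam : Fin n → ℝ) (hij : i < j) :
    degree c (lam + c • rootv n i j) + 2 ≤ degree c lam := by
  have hij' : (i : ℤ) < j := mod_cast hij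
  have h := degree_add_smul_rootv hc lam 1 i j
  rw [Int.cast_one, mul_one] at h
  linarith

theorem IsTwoStep.add_lt_of_sub_right_eq_rootv
    (h : IsTwoStep r lam endv (rootv n i j) (rootv n k l) m m')
    (hdeg : degree r endv = degree r lam + 2) (hkl : k < l) (hpq : p < q)
    (hαβ : pairing (rootv n i j) (rootv n k l) = 1)
    (hroot : rootv n i j - rootv n k l = rootv n p q) : m + m' < r := by
  have hβ := pairing_rootv_self hkl.ne
  have hr := h.1.modulus_pos
  rw [isTwoStep_iff] at h
  obtain ⟨hm, hm', ⟨a, ha⟩, ⟨b, hb⟩, rfl⟩ := h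
  by_contra! hge
  set mid := lam - ((m + m' - r : ℤ) : ℝ) • rootv n k l with hmid
  have hν : pairing lam (rootv n k l) = (m + m' - r : ℤ) + r * (b + 1 : ℤ) := by
    rw [hb, hαβ]; push_cast; ring
  have hm_mid : isM r mid (rootv n p q) m := ⟨hm.1, hm.2, a - b - 1, by
    rw [← hroot, hmid, pairing_sub_left, pairing_smul_left, pairing_sub_right, pairing_sub_right,
      pairing_comm (rootv n k l) (rootv n i j), ha, hb, hαβ, hβ]
    push_cast; ring⟩
  have hend : mid - (m : ℝ) • rootv n p q =
      lam - (m : ℝ) • rootv n i j - (m' : ℝ) • rootv n k l + (r : ℝ) • rootv n k l := by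
    rw [← hroot, hmid]; push_cast; module
  have le₁ := degree_le_of_residue hkl (by lia) (by lia) hν
  have le₂ := degree_add_one_le_of_isM hpq hm_mid
  have le₃ := degree_add_smul_rootv_add_two_le hr.ne'
    (lam - (m : ℝ) • rootv n i j - (m' : ℝ) • rootv n k l) hkl
  rw [hend] at le₂
  linarith

theorem IsTwoStep.add_lt_of_sub_left_eq_rootv
    (h : IsTwoStep r lam endv (rootv n i j) (rootv n k l) m m')
    (hdeg : degree r endv = degree r lam + 2) (hij : i < j) (hpq : p < q)
    (hαβ : pairing (rootv n i j) (rootv n k l) = 1)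
    (hroot : rootv n k l - rootv n i j = rootv n p q) : m + m' < r := by
  have hα := pairing_rootv_self hij.ne
  have hr := h.1.modulus_pos
  rw [isTwoStep_iff] at h
  obtain ⟨hm, hm', ⟨a, ha⟩, ⟨b, hb⟩, rfl⟩ := h
  by_contra! hge
  set mid := lam - (m' : ℝ) • rootv n p q with hmid
  have hm'_lam : isM r lam (rootv n p q) m' := ⟨hm'.1, hm'.2, b - a, by
    rw [← hroot, pairing_sub_right, ha, hb, hαβ]; push_cast; ring⟩
  have hν : pairing mid (rootv n i j) = (m + m' - r : ℤ) + r * (a + 1 : ℤ) := by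
    rw [hmid, ← hroot, pairing_sub_left, pairing_smul_left, pairing_sub_left,
      pairing_comm (rootv n k l) (rootv n i j), ha, hαβ, hα]
    push_cast; ring
  have hend : mid - ((m + m' - r : ℤ) : ℝ) • rootv n i j =
      lam - (m : ℝ) • rootv n i j - (m' : ℝ) • rootv n k l + (r : ℝ) • rootv n i j := by
    rw [hmid, ← hroot]; push_cast; module
  have le₁ := degree_add_one_le_of_isM hpq hm'_lam
  have le₂ := degree_le_of_residue hij (by lia) (by lia) hν
  have le₃ := degree_add_smul_rootv_add_two_le hr.ne'
    (lam - (m : ℝ) • rootv n i j - (m' : ℝ) • rootv n k l) hij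
  rw [hend] at le₂
  linarith

end TwoStep

section Uniqueness

variable {n : ℕ} {r m m' : ℤ} {Λ lam endv : Fin n → ℝ} {σ : Perm (Fin n)} {i j k l p q s t : Fin n}

theorem InAffineOrbit.hurwitz {μ μ' : ℤ} (hΛ : InAlcove r Λ) (hlam : InAffineOrbit r Λ σ lam)
    (hij : i < j) (hkl : k < l) (hpq : p < q) (hst : s < t) (hne : (i, j) ≠ (k, l))
    (hne' : (p, q) ≠ (i, j)) (h : IsTwoStep r lam endv (rootv n i j) (rootv n k l) m m')
    (h' : IsTwoStep r lam endv (rootv n p q) (rootv n s t) μ μ') :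
    (swap p q = swap k l ∧ swap s t = swap (swap k l i) (swap k l j)) ∨
      (swap s t = swap i j ∧ swap p q = swap (swap i j k) (swap i j l)) := by
  have hperm := (h.inAffineOrbit hlam hij.ne hkl.ne).perm_unique hΛ
    (h'.inAffineOrbit hlam hpq.ne hst.ne)
  rw [← mul_assoc, ← mul_assoc, mul_left_inj] at hperm
  exact hurwitz_of_swap_mul_swap_eq hij.ne hkl.ne hpq.ne hst.ne hperm
    (fun h => hne (Prod.ext_iff.2 (eq_of_swap_eq_of_lt hij hkl h)))
    (fun h => hne' (Prod.ext_iff.2 (eq_of_swap_eq_of_lt hpq hij h)))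

theorem IsTwoStep.ne_of_add_eq_rootv (hΛ : InAlcove r Λ) (hlam : InAffineOrbit r Λ σ lam)
    (h : IsTwoStep r lam endv (rootv n i j) (rootv n k l) m m')
    (hij : i ≠ j) (hkl : k ≠ l) (hpq : p ≠ q)
    (hroot : rootv n i j + rootv n k l = rootv n p q) : m ≠ m' := by
  rintro rfl
  have hend := h.inAffineOrbit hlam hij hkl
  rw [isTwoStep_iff, pairing_eq_neg_one_of_add_eq_rootv hij hkl hpq hroot] at h
  obtain ⟨⟨hm₀, hmr⟩, -, ⟨a, ha⟩, ⟨b, hb⟩, rfl⟩ := h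
  have hm : isM r lam (rootv n p q) m := ⟨hm₀, hmr, a + b, by
    rw [← hroot, pairing_add_right, ha, hb]; push_cast; ring⟩
  have hend' := hlam.sub_smul_rootv hpq hm
  rw [← hroot, smul_add, ← sub_sub] at hend'
  have hsign := congrArg Perm.sign (hend.perm_unique hΛ hend')
  simp [Perm.sign_mul, hij, hkl, hpq] at hsign

theorem IsTwoStep.smul_add_smul_eq {α β α' β' : Fin n → ℝ} {μ μ' : ℤ}
    (h : IsTwoStep r lam endv α β m m') (h' : IsTwoStep r lam endv α' β' μ μ') :
    (m : ℝ) • α + (m' : ℝ) • β = (μ : ℝ) • α' + (μ' : ℝ) • β' := by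
  have hend := h.2.2.symm.trans h'.2.2
  rw [sub_sub, sub_sub] at hend
  exact sub_right_injective hend

theorem IsTwoStep.other_path_cases {μ μ' : ℤ} (hΛ : InAlcove r Λ) (hlam : InAffineOrbit r Λ σ lam)
    (hij : i < j) (hkl : k < l) (hpq : p < q) (hst : s < t) (hne : (i, j) ≠ (k, l))
    (hne' : (p, q) ≠ (i, j)) (h : IsTwoStep r lam endv (rootv n i j) (rootv n k l) m m')
    (h' : IsTwoStep r lam endv (rootv n p q) (rootv n s t) μ μ') :
    let e := pairing (rootv n i j) (rootv n k l)
    ((p, q) = (k, l) ∧ rootv n s t = rootv n i j - e • rootv n k l ∧ μ = m' + m * e) ∨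
      ((s, t) = (i, j) ∧ rootv n p q = rootv n k l - e • rootv n i j ∧ μ' = m + m' * e) := by
  intro e
  have hα := pairing_rootv_self hij.ne
  have hβ := pairing_rootv_self hkl.ne
  have he : e ^ 2 < 4 := by
    rcases pairing_rootv_cases hij hkl hne with h | h | h <;> norm_num [e, h]
  have he_comm : e = pairing (rootv n k l) (rootv n i j) := pairing_comm ..
  have hcomb := h.smul_add_smul_eq h'
  have pos {a : ℤ} (ha : 0 < a) : (0 : ℝ) < a := mod_cast ha
  rcases hlam.hurwitz hΛ hij hkl hpq hst hne hne' h h' with ⟨hpq', hst'⟩ | ⟨hst', hpq'⟩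
  · left
    obtain ⟨rfl, rfl⟩ := eq_of_swap_eq_of_lt hpq hkl hpq'
    have hδ := rootv_eq_or_eq_neg_of_swap_eq hst.ne hst'
    rw [rootv_swap_apply hkl.ne] at hδ
    exact ⟨rfl, eq_reflection_of_smul_add_smul_eq hα hβ he (pos h.1.1) (pos h'.2.1.1) hδ hcomb⟩
  · right
    obtain ⟨rfl, rfl⟩ := eq_of_swap_eq_of_lt hst hij hst'
    have hδ := rootv_eq_or_eq_neg_of_swap_eq hpq.ne hpq'
    rw [rootv_swap_apply hij.ne] at hδ
    rw [add_comm, add_comm ((μ : ℝ) • _)] at hcomb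
    rw [he_comm] at he ⊢
    exact ⟨rfl, eq_reflection_of_smul_add_smul_eq hβ hα he (pos h.2.1.1) (pos h'.1.1) hδ hcomb⟩

theorem eq_of_opposite_other_paths (hij : i < j) (hkl : k < l) (hpq : p < q) (hst : s < t)
    (hne : (i, j) ≠ (k, l)) {e : ℝ} (he : e = pairing (rootv n i j) (rootv n k l))
    (hst_eq : rootv n s t = rootv n i j - e • rootv n k l) (hpos : 0 < m' + m * e)
    (hpq_eq : rootv n p q = rootv n k l - e • rootv n i j) (hpos' : 0 < m + m' * e) :
    (s, t) = (i, j) ∧ (p, q) = (k, l) := by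
  rcases pairing_rootv_cases hij hkl hne with h | h | h <;> rw [h] at he <;> subst he
  · rw [zero_smul, sub_zero] at hst_eq hpq_eq
    exact ⟨Prod.ext_iff.2 (rootv_inj hst.ne hst_eq), Prod.ext_iff.2 (rootv_inj hpq.ne hpq_eq)⟩
  · have hopp : rootv n p q = rootv n t s := by
      rw [rootv_swap s t, hst_eq, hpq_eq]; module
    obtain ⟨rfl, rfl⟩ := rootv_inj hpq.ne hopp
    exact absurd hst hpq.not_gt
  · linarith

theorem AdmSq.other_unique {p' q' s' t' : Fin n} (hΛ : InAlcove r Λ)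
    (hlam : InAffineOrbit r Λ σ lam) (hne : (i, j) ≠ (k, l)) (h₀ : AdmSq n r Λ σ lam endv i j k l)
    (hpq_ne : (p, q) ≠ (i, j)) (h : AdmSq n r Λ σ lam endv p q s t)
    (hpq_ne' : (p', q') ≠ (i, j)) (h' : AdmSq n r Λ σ lam endv p' q' s' t') :
    (p, q) = (p', q') ∧ (s, t) = (s', t') := by
  rw [admSq_iff hΛ hlam] at h₀ h h'
  obtain ⟨hij, hkl, -, m, m', h₀⟩ := h₀
  obtain ⟨hpq, hst, -, μ, μ', h⟩ := h
  obtain ⟨hpq', hst', -, ν, ν', h'⟩ := h'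
  have pos {a : ℤ} (ha : 0 < a) : (0 : ℝ) < a := mod_cast ha
  have hμ := pos h.1.1
  have hμ' := pos h.2.1.1
  have hν := pos h'.1.1
  have hν' := pos h'.2.1.1
  rcases h₀.other_path_cases hΛ hlam hij hkl hpq hst hne hpq_ne h with
      ⟨first, second, hcoef⟩ | ⟨second, first, hcoef⟩ <;>
    rcases h₀.other_path_cases hΛ hlam hij hkl hpq' hst' hne hpq_ne' h' with
      ⟨first', second', hcoef'⟩ | ⟨second', first', hcoef'⟩
  · exact ⟨first.trans first'.symm, Prod.ext_iff.2 (rootv_inj hst.ne (second.trans second'.symm))⟩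
  · obtain ⟨hs, hp⟩ := eq_of_opposite_other_paths hij hkl hpq' hst hne rfl second (hcoef ▸ hμ)
      first' (hcoef' ▸ hν')
    exact ⟨first.trans hp.symm, hs.trans second'.symm⟩
  · obtain ⟨hs, hp⟩ := eq_of_opposite_other_paths hij hkl hpq hst' hne rfl second' (hcoef' ▸ hν)
      first (hcoef ▸ hμ')
    exact ⟨hp.trans first'.symm, second.trans hs.symm⟩
  · exact ⟨Prod.ext_iff.2 (rootv_inj hpq.ne (first.trans first'.symm)), second.trans second'.symm⟩

end Uniqueness

section Existence

variable {n : ℕ} {r m m' : ℤ} {Λ lam endv : Fin n → ℝ} {σ : Perm (Fin n)} {i j k l p q : Fin n}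

theorem AdmSq.comm_of_orthogonal (hΛ : InAlcove r Λ) (hlam : InAffineOrbit r Λ σ lam)
    (h : AdmSq n r Λ σ lam endv i j k l) (hαβ : pairing (rootv n i j) (rootv n k l) = 0) :
    AdmSq n r Λ σ lam endv k l i j := by
  rw [admSq_iff hΛ hlam] at h ⊢
  obtain ⟨hij, hkl, hdeg, m, m', hm⟩ := h
  exact ⟨hkl, hij, hdeg, m', m, hm.comm_of_orthogonal hαβ⟩

theorem AdmSq.sub_right (hΛ : InAlcove r Λ) (hlam : InAffineOrbit r Λ σ lam)
    (h : AdmSq n r Λ σ lam endv i j k l) (hpq : p < q)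
    (hroot : rootv n i j - rootv n k l = rootv n p q) : AdmSq n r Λ σ lam endv k l p q := by
  rw [admSq_iff hΛ hlam] at h ⊢
  obtain ⟨hij, hkl, hdeg, m, m', hm⟩ := h
  have hαβ := pairing_eq_one_of_sub_eq_rootv hij.ne hkl.ne hpq.ne hroot
  have hlt := hm.add_lt_of_sub_right_eq_rootv hdeg hkl hpq hαβ hroot
  exact ⟨hkl, hpq, hdeg, m + m', m,
    hroot ▸ hm.sub_right (pairing_rootv_self hkl.ne) hαβ hlt⟩

theorem AdmSq.sub_left (hΛ : InAlcove r Λ) (hlam : InAffineOrbit r Λ σ lam)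
    (h : AdmSq n r Λ σ lam endv i j k l) (hpq : p < q)
    (hroot : rootv n k l - rootv n i j = rootv n p q) : AdmSq n r Λ σ lam endv p q i j := by
  rw [admSq_iff hΛ hlam] at h ⊢
  obtain ⟨hij, hkl, hdeg, m, m', hm⟩ := h
  have hαβ := pairing_eq_one_of_sub_eq_rootv hkl.ne hij.ne hpq.ne hroot
  rw [pairing_comm] at hαβ
  have hlt := hm.add_lt_of_sub_left_eq_rootv hdeg hij hpq hαβ hroot
  exact ⟨hpq, hij, hdeg, m', m + m',
    hroot ▸ hm.sub_left (pairing_rootv_self hij.ne) hαβ hlt⟩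

theorem admSq_of_add_eq_rootv (hΛ : InAlcove r Λ) (hlam : InAffineOrbit r Λ σ lam)
    (h : IsTwoStep r lam endv (rootv n i j) (rootv n k l) m m')
    (hdeg : degree r endv = degree r lam + 2) (hij : i < j) (hkl : k < l) (hpq : p < q)
    (hroot : rootv n i j + rootv n k l = rootv n p q) :
    (m' < m → AdmSq n r Λ σ lam endv p q i j) ∧ (m < m' → AdmSq n r Λ σ lam endv k l p q) := by
  have hαβ := pairing_eq_neg_one_of_add_eq_rootv hij.ne hkl.ne hpq.ne hroot
  rw [admSq_iff hΛ hlam, admSq_iff hΛ hlam]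
  exact ⟨fun hlt => ⟨hpq, hij, hdeg, m', m - m',
      hroot ▸ h.add_left (pairing_rootv_self hij.ne) hαβ hlt⟩,
    fun hlt => ⟨hkl, hpq, hdeg, m' - m, m,
      hroot ▸ h.add_right (pairing_rootv_self hkl.ne) hαβ hlt⟩⟩

theorem AdmSq.exists_other (hΛ : InAlcove r Λ) (hlam : InAffineOrbit r Λ σ lam)
    (hne : (i, j) ≠ (k, l)) (h : AdmSq n r Λ σ lam endv i j k l) :
    ∃ p q s t, (p, q) ≠ (i, j) ∧ AdmSq n r Λ σ lam endv p q s t := by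
  obtain ⟨hij, hkl, hdeg, m, m', hm⟩ := (admSq_iff hΛ hlam).1 h
  rcases orthogonal_or_sub_or_add_eq_rootv hij hkl hne with h₀ | ⟨p, q, hpq, h₁ | h₁ | h₁⟩
  · exact ⟨k, l, i, j, hne.symm, h.comm_of_orthogonal hΛ hlam h₀⟩
  · exact ⟨k, l, p, q, hne.symm, h.sub_right hΛ hlam hpq h₁⟩
  · refine ⟨p, q, i, j, ?_, h.sub_left hΛ hlam hpq h₁⟩
    rintro ⟨⟩
    have key := pairing_eq_one_of_sub_eq_rootv hkl.ne hij.ne hpq.ne h₁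
    rw [sub_eq_iff_eq_add.1 h₁, pairing_add_left, pairing_rootv_self hij.ne] at key
    norm_num at key
  · obtain ⟨hadd, hadd'⟩ := admSq_of_add_eq_rootv hΛ hlam hm hdeg hij hkl hpq h₁
    rcases (hm.ne_of_add_eq_rootv hΛ hlam hij.ne hkl.ne hpq.ne h₁).lt_or_gt with hlt | hgt
    · exact ⟨k, l, p, q, hne.symm, hadd' hlt⟩
    · refine ⟨p, q, i, j, ?_, hadd hgt⟩
      rintro ⟨⟩
      have key := pairing_rootv_self hkl.ne
      rw [add_eq_left.1 h₁] at key
      simp [pairing] at key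

end Existence

theorem stmt9_general (n : ℕ) (r : ℤ) (Λ : Fin n → ℝ)
    (hΛ : ∀ a b : Fin n, a < b → 0 < Λ a - Λ b ∧ Λ a - Λ b < (r : ℝ))
    (σ : Equiv.Perm (Fin n)) (γ : Fin n → ℤ)
    (lam : Fin n → ℝ) (hlam : lam = fun t => Λ (σ.symm t) + (r : ℝ) * (γ t : ℝ))
    (i j k l : Fin n) (hij : i < j) (hkl : k < l)
    (hne : ¬(i = k ∧ j = l))
    (m m' : ℤ)
    (hm : isM r lam (rootv n i j) m)
    (hm' : isM r (fun t => lam t - (m : ℝ) * rootv n i j t) (rootv n k l) m')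
    (had1 : dval Λ σ i j = 1)
    (had2 : dval Λ (Equiv.swap i j * σ) k l = 1)
    (endv : Fin n → ℝ)
    (hend : endv = fun t => lam t - (m : ℝ) * rootv n i j t - (m' : ℝ) * rootv n k l t) :
    (∃! P : (Fin n × Fin n) × (Fin n × Fin n),
        P.1 ≠ (i, j) ∧ AdmSq n r Λ σ lam endv P.1.1 P.1.2 P.2.1 P.2.2) ∧
    (pairing (rootv n i j) (rootv n k l) = 0 → AdmSq n r Λ σ lam endv k l i j) ∧
    (∀ p q : Fin n, p < q →
      (fun t => rootv n i j t - rootv n k l t) = rootv n p q →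
      AdmSq n r Λ σ lam endv k l p q) ∧
    (∀ p q : Fin n, p < q →
      (fun t => rootv n k l t - rootv n i j t) = rootv n p q →
      AdmSq n r Λ σ lam endv p q i j) ∧
    (∀ p q : Fin n, p < q →
      (fun t => rootv n i j t + rootv n k l t) = rootv n p q →
      (m' < m → AdmSq n r Λ σ lam endv p q i j) ∧
      (m < m' → AdmSq n r Λ σ lam endv k l p q)) := by
  have hne : (i, j) ≠ (k, l) := fun h => hne (Prod.ext_iff.1 h)
  have horbit : InAffineOrbit r Λ σ lam := ⟨γ, hlam⟩
  have hpath : IsTwoStep r lam endv (rootv n i j) (rootv n k l) m m' := ⟨hm, hm', hend⟩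
  have hadm : AdmSq n r Λ σ lam endv i j k l := ⟨hij, hkl, had1, had2, m, m', hm, hm', hend⟩
  obtain ⟨-, -, hdeg, -⟩ := (admSq_iff hΛ horbit).1 hadm
  refine ⟨existsUnique_of_exists_of_unique ?_ ?_, hadm.comm_of_orthogonal hΛ horbit,
    fun p q => hadm.sub_right hΛ horbit, fun p q => hadm.sub_left hΛ horbit,
    fun p q => admSq_of_add_eq_rootv hΛ horbit hpath hdeg hij hkl⟩
  · obtain ⟨p, q, s, t, hpq, h⟩ := hadm.exists_other hΛ horbit hne
    exact ⟨((p, q), (s, t)), hpq, h⟩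
  · rintro P Q ⟨hP, hPadm⟩ ⟨hQ, hQadm⟩
    exact Prod.ext_iff.2 (hadm.other_unique hΛ horbit hne hP hPadm hQ hQadm)

/-- Commutative squares (Theorem on `d² = 0` configurations).
Suppose `λ` is in the affine orbit of a strictly dominant `Λ`, `α = ε_i - ε_j` and
`β = ε_k - ε_l` are positive roots with `(α,β) ≠ 2` (i.e. `α ≠ β`), and
`(λ, λ^α, λ^{α,β})` is admissible with `m = m_α(λ)`, `m' = m_β(λ^α)`.  Then there
is a unique pair of positive roots `(α', β')` with `α' ≠ α` such that
`(λ, λ^{α'}, λ^{α',β'})` is admissible and `λ^{α',β'} = λ^{α,β}`.  Explicitly: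
if `(α,β) = 0` then `(α',β') = (β,α)`; if `(α,β) = 1` then `(α',β') = (β, α-β)`
or `(β-α, α)` according to which difference is a positive root; if `(α,β) = -1`
then `(α',β') = (α+β, α)` if `m > m'` and `(β, α+β)` if `m < m'`. -/
theorem stmt9 (n : ℕ) (r : ℤ) (hr : (n : ℤ) + 2 ≤ r) (Λ : Fin n → ℝ)
    (hΛ : ∀ a b : Fin n, a < b → 0 < Λ a - Λ b ∧ Λ a - Λ b < (r : ℝ))
    (σ : Equiv.Perm (Fin n)) (γ : Fin n → ℤ) (hγ : (∑ t, γ t) = 0)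
    (lam : Fin n → ℝ) (hlam : lam = fun t => Λ (σ.symm t) + (r : ℝ) * (γ t : ℝ))
    (i j k l : Fin n) (hij : i < j) (hkl : k < l)
    (hne : ¬(i = k ∧ j = l))
    (m m' : ℤ)
    (hm : isM r lam (rootv n i j) m)
    (hm' : isM r (fun t => lam t - (m : ℝ) * rootv n i j t) (rootv n k l) m')
    (had1 : dval Λ σ i j = 1)
    (had2 : dval Λ (Equiv.swap i j * σ) k l = 1)
    (endv : Fin n → ℝ)
    (hend : endv = fun t => lam t - (m : ℝ) * rootv n i j t - (m' : ℝ) * rootv n k l t) :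
    (∃! P : (Fin n × Fin n) × (Fin n × Fin n),
        P.1 ≠ (i, j) ∧ AdmSq n r Λ σ lam endv P.1.1 P.1.2 P.2.1 P.2.2) ∧
    (pairing (rootv n i j) (rootv n k l) = 0 → AdmSq n r Λ σ lam endv k l i j) ∧
    (∀ p q : Fin n, p < q →
      (fun t => rootv n i j t - rootv n k l t) = rootv n p q →
      AdmSq n r Λ σ lam endv k l p q) ∧
    (∀ p q : Fin n, p < q →
      (fun t => rootv n k l t - rootv n i j t) = rootv n p q →
      AdmSq n r Λ σ lam endv p q i j) ∧
    (∀ p q : Fin n, p < q →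
      (fun t => rootv n i j t + rootv n k l t) = rootv n p q →
      (m' < m → AdmSq n r Λ σ lam endv p q i j) ∧
      (m < m' → AdmSq n r Λ σ lam endv k l p q)) := by
  exact stmt9_general n r Λ hΛ σ γ lam hlam i j k l hij hkl hne m m' hm hm' had1 had2 endv hend
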